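/- The numerator R(q) of the q-rational [r/s]_q equals the generating function ∑_{p} q^{|p|} over monotone lattice paths p on the snake graph G(r/s) from bottom-left to top-right, where |p| is the number of tiles of G(r/s) lying above p. -/

import Mathlib

open scoped Classical

def snakeWord (a : List ℕ) : List Bool :=
  (List.range a.length).flatMap fun i =>
    List.replicate
      (if i = 0 ∨ i = a.length - 1 then a.getD i 0 - 1 else a.getD i 0)
      (i % 2 == 1)

def tilePos (w : List Bool) (j : ℕ) : ℕ × ℕ :=
  ((w.take j).count false, (w.take j).count true)

def IsSnakePath (w : List Bool) (p : Fin (w.length + 3) → ℕ × ℕ) : Prop :=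
  p 0 = (0, 0) ∧
  p (Fin.last _) = ((tilePos w w.length).1 + 1, (tilePos w w.length).2 + 1) ∧
  ∀ i : Fin (w.length + 2), ∃ j ≤ w.length,
    (p i.succ = ((p i.castSucc).1 + 1, (p i.castSucc).2) ∧
      (p i.castSucc = tilePos w j ∨
       p i.castSucc = ((tilePos w j).1, (tilePos w j).2 + 1))) ∨
    (p i.succ = ((p i.castSucc).1, (p i.castSucc).2 + 1) ∧
      (p i.castSucc = tilePos w j ∨
       p i.castSucc = ((tilePos w j).1 + 1, (tilePos w j).2)))

/-- Tile `j` lies (weakly) above the path `p`: the horizontal step of `p` crossing the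
column of tile `j` is at height at most the height of tile `j`. -/
def TileAbove (w : List Bool) (p : Fin (w.length + 3) → ℕ × ℕ) (j : ℕ) : Prop :=
  ∃ (i : Fin (w.length + 2)) (y : ℕ), y ≤ (tilePos w j).2 ∧
    p i.castSucc = ((tilePos w j).1, y) ∧ p i.succ = ((tilePos w j).1 + 1, y)

/-- The number of tiles of the snake graph lying above the path `p`. -/
noncomputable def pathArea (w : List Bool) (p : Fin (w.length + 3) → ℕ × ℕ) : ℕ :=
  ((Finset.range (w.length + 1)).filter fun j => TileAbove w p j).card

/-- The Morier-Genoud–Ovsienko q-deformed continued fraction: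
`qCF v [a₁,a₂,…] = [a₁]_v + v^{a₁} / qCF v⁻¹ [a₂,…]`, so that
`qCF RatFunc.X [a₁,…,a₂ₘ]` is the q-rational `[r/s]_q`. -/
noncomputable def qCF : RatFunc ℚ → List ℕ → RatFunc ℚ
  | _, [] => 0
  | v, [a] => ∑ i ∈ Finset.range a, v ^ i
  | v, a :: b :: l => (∑ i ∈ Finset.range a, v ^ i) + v ^ a / qCF v⁻¹ (b :: l)

/-!
A path on the snake graph meets the antidiagonal of each tile in one of its two off-diagonal
corners. Recording these corners identifies the paths with the order ideals of a fence poset, and a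
tile lies above the path exactly when its lower right corner is met. Deleting the first tile gives
a recursion for the generating function with prescribed first corner, that is, a product of
elementary `q`-matrices read off the word.

On the other side, `[n + 1, …]_v = 1 + v [n, …]_v` and `[0, l]_v = 1 / [l]_{v⁻¹}`, so the same
matrices produce the continued fraction one letter at a time. The resulting fraction is reduced
with monic denominator, so its numerator can be read off.
-/

open Polynomial

section LatticePath

/-- The unit step of a lattice path encoded by a letter of a snake word: up for `true`, right for
`false`. -/
def unitStep (c : Bool) : ℕ × ℕ := if c then (0, 1) else (1, 0)

lemma unitStep_injective : Function.Injective unitStep := by decide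

lemma unitStep_add_unitStep_not (c : Bool) : unitStep c + unitStep (!c) = (1, 1) := by
  cases c <;> rfl

lemma unitStep_fst_add_snd (c : Bool) : (unitStep c).1 + (unitStep c).2 = 1 := by
  cases c <;> rfl

/-- A monotone lattice path of length `N` starting at the origin. -/
def IsLatticePath {N : ℕ} (p : Fin (N + 1) → ℕ × ℕ) : Prop :=
  p 0 = 0 ∧ ∀ i : Fin N, ∃ c, p i.succ = p i.castSucc + unitStep c

variable {N : ℕ} {p : Fin (N + 1) → ℕ × ℕ}

lemma IsLatticePath.monotone (hp : IsLatticePath p) : Monotone p := by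
  refine Fin.monotone_iff_le_succ.2 fun i => ?_
  obtain ⟨c, hc⟩ := hp.2 i
  exact hc ▸ le_self_add

lemma IsLatticePath.fst_add_snd (hp : IsLatticePath p) (i : Fin (N + 1)) :
    (p i).1 + (p i).2 = i := by
  induction i using Fin.induction with
  | zero => simp [hp.1]
  | succ i ih =>
    obtain ⟨c, hc⟩ := hp.2 i
    have hunit := unitStep_fst_add_snd c
    rw [Fin.val_castSucc] at ih
    rw [hc, Prod.fst_add, Prod.snd_add, Fin.val_succ]
    omega

lemma IsLatticePath.exists_crossing (hp : IsLatticePath p) {x : ℕ} (i : Fin (N + 1))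
    (hx : x < (p i).1) :
    ∃ (k : Fin N) (y : ℕ), y ≤ (p i).2 ∧ p k.castSucc = (x, y) ∧ p k.succ = (x + 1, y) := by
  induction i using Fin.induction with
  | zero => simp [hp.1] at hx
  | succ i ih =>
    obtain ⟨c, hc⟩ := hp.2 i
    by_cases hlt : x < (p i.castSucc).1
    · obtain ⟨k, y, hy, hk⟩ := ih hlt
      exact ⟨k, y, hy.trans (hp.monotone i.castSucc_le_succ).2, hk⟩
    · rw [hc, Prod.fst_add] at hx
      cases c with
      | true => exact absurd hx hlt
      | false =>
        have hfst : (p i.castSucc).1 = x := by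
          simp only [unitStep, Bool.false_eq_true, if_false] at hx
          omega
        refine ⟨i, (p i.castSucc).2, (hp.monotone i.castSucc_le_succ).2, ?_, ?_⟩
        · exact Prod.ext hfst rfl
        · rw [hc, ← hfst]
          rfl

end LatticePath

section SnakePath

lemma tilePos_zero (w : List Bool) : tilePos w 0 = 0 := by simp [tilePos]

lemma tilePos_fst_add_snd (w : List Bool) {j : ℕ} (hj : j ≤ w.length) :
    (tilePos w j).1 + (tilePos w j).2 = j := by
  simp [tilePos, List.count_false_add_count_true, hj]

lemma tilePos_succ (w : List Bool) (k : Fin w.length) :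
    tilePos w (k + 1) = tilePos w k + unitStep w[k] := by
  simp only [tilePos, List.take_succ_eq_append_getElem k.2, List.count_append, Fin.getElem_fin]
  cases w[k.1] <;> rfl

variable {w : List Bool} {p : Fin (w.length + 3) → ℕ × ℕ}

/-- The second alternative is a step along the far side of tile `j`. -/
lemma isSnakePath_iff :
    IsSnakePath w p ↔ p 0 = 0 ∧ p (Fin.last _) = tilePos w w.length + (1, 1) ∧
      ∀ i : Fin (w.length + 2), ∃ j ≤ w.length, ∃ c,
        p i.succ = p i.castSucc + unitStep c ∧
          (p i.castSucc = tilePos w j ∨ p i.castSucc = tilePos w j + unitStep (!c)) := by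
  simp only [IsSnakePath, Bool.exists_bool]
  rfl

lemma IsSnakePath.isLatticePath (hp : IsSnakePath w p) : IsLatticePath p := by
  obtain ⟨h0, -, hstep⟩ := isSnakePath_iff.1 hp
  exact ⟨h0, fun i => let ⟨_, _, c, hc, _⟩ := hstep i; ⟨c, hc⟩⟩

lemma IsSnakePath.exists_corner (hp : IsSnakePath w p) (j : Fin (w.length + 1)) :
    ∃ c, p j.castSucc.succ = tilePos w j + unitStep c := by
  obtain ⟨k, hk, c, -, hvertex⟩ := (isSnakePath_iff.1 hp).2.2 j.succ
  rw [← Fin.succ_castSucc] at hvertex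
  have hsum := hp.isLatticePath.fst_add_snd j.castSucc.succ
  have htile := tilePos_fst_add_snd w hk
  simp only [Fin.val_succ, Fin.val_castSucc] at hsum
  rcases hvertex with h | h
  · obtain rfl : k = j + 1 := by rw [h] at hsum; omega
    exact ⟨w[j.1], h.trans (tilePos_succ w ⟨j, hk⟩)⟩
  · have hunit := unitStep_fst_add_snd (!c)
    obtain rfl : k = j := by
      rw [h, Prod.fst_add, Prod.snd_add] at hsum
      omega
    exact ⟨!c, h⟩

lemma IsLatticePath.tileAbove_iff (hp : IsLatticePath p) {j : Fin (w.length + 1)} {c : Bool}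
    (hc : p j.castSucc.succ = tilePos w j + unitStep c) : TileAbove w p j ↔ c = false := by
  constructor
  · rintro ⟨i, y, hy, hi, hi'⟩
    have hle : i.succ ≤ j.castSucc.succ := by
      have hsum := hp.fst_add_snd i.castSucc
      have htile := tilePos_fst_add_snd w (Nat.lt_succ_iff.1 j.2)
      rw [hi, Fin.val_castSucc] at hsum
      rw [Fin.succ_le_succ_iff, Fin.le_def, Fin.val_castSucc]
      dsimp only at hsum
      omega
    have hfst := (hp.monotone hle).1
    rw [hi', hc] at hfst
    cases c
    · rfl
    · simp [unitStep] at hfst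
  · rintro rfl
    obtain ⟨k, y, hy, hk⟩ := hp.exists_crossing (x := (tilePos w j).1) j.castSucc.succ (by
      simp [hc, unitStep])
    exact ⟨k, y, by simpa [hc, unitStep] using hy, hk⟩

end SnakePath

section CornerChoice

/-- A choice of one corner for each tile (the upper left one for `true`, the lower right one for
`false`) that is realized by a path on the snake graph of `w`. Such choices are the order ideals of
a fence poset whose cover relations are read off `w`. -/
def IsCornerChoice (w : List Bool) (b : Fin (w.length + 1) → Bool) : Prop :=
  ∀ k : Fin w.length, b k.succ = w[k] → b k.castSucc = w[k]

/-- The sequence of vertices that visits the corner `b j` of each tile `j` in turn, between the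
two ends of the snake graph. -/
def cornerPath (w : List Bool) (b : Fin (w.length + 1) → Bool) : Fin (w.length + 3) → ℕ × ℕ :=
  Fin.cons 0 (Fin.snoc (fun j => tilePos w j + unitStep (b j)) (tilePos w w.length + (1, 1)))

variable {w : List Bool} {b : Fin (w.length + 1) → Bool}

lemma cornerPath_zero : cornerPath w b 0 = 0 := rfl

lemma cornerPath_castSucc_succ (j : Fin (w.length + 1)) :
    cornerPath w b j.castSucc.succ = tilePos w j + unitStep (b j) := by
  simp [cornerPath]

lemma cornerPath_last : cornerPath w b (Fin.last _) = tilePos w w.length + (1, 1) := by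
  rw [cornerPath, ← Fin.succ_last, Fin.cons_succ, Fin.snoc_last]

lemma cornerPath_injective (w : List Bool) : Function.Injective (cornerPath w) := by
  refine fun b b' h => funext fun j => unitStep_injective ?_
  simpa only [cornerPath_castSucc_succ, add_right_inj] using congrFun h j.castSucc.succ

lemma IsCornerChoice.isSnakePath (hb : IsCornerChoice w b) : IsSnakePath w (cornerPath w b) := by
  refine isSnakePath_iff.2 ⟨cornerPath_zero, cornerPath_last, fun i => ?_⟩
  cases i using Fin.cases with
  | zero =>
    refine ⟨0, Nat.zero_le _, b 0, ?_, Or.inl (tilePos_zero w).symm⟩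
    simpa [tilePos_zero, cornerPath_zero] using cornerPath_castSucc_succ (b := b) 0
  | succ j =>
    rw [← Fin.succ_castSucc, cornerPath_castSucc_succ]
    cases j using Fin.lastCases with
    | last =>
      refine ⟨w.length, le_rfl, !b (Fin.last _), ?_, Or.inr (by simp)⟩
      rw [Fin.succ_last, Fin.succ_last, cornerPath_last, add_assoc, unitStep_add_unitStep_not,
        Fin.val_last]
    | cast k =>
      rw [Fin.succ_castSucc, cornerPath_castSucc_succ, Fin.val_succ, Fin.val_castSucc,
        tilePos_succ]
      by_cases hk : b k.castSucc = w[k]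
      · exact ⟨k + 1, k.2, b k.succ, by rw [hk], Or.inl (by rw [hk, tilePos_succ])⟩
      · have hcast : b k.castSucc = !w[k] := Bool.eq_not_of_ne hk
        have hsucc : b k.succ = !w[k] := Bool.eq_not_of_ne fun h => hk (hb k h)
        exact ⟨k, k.2.le, w[k], by rw [hcast, hsucc, add_right_comm], Or.inr (by rw [hcast])⟩

/-- Taking the far corner of tile `k` and then leaving tile `k + 1` in the same direction would
need two steps at once. -/
lemma IsLatticePath.isCornerChoice {p : Fin (w.length + 3) → ℕ × ℕ} (hp : IsLatticePath p)
    (hb : ∀ j : Fin (w.length + 1), p j.castSucc.succ = tilePos w j + unitStep (b j)) :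
    IsCornerChoice w b := by
  intro k hk
  obtain ⟨c, hc⟩ := hp.2 k.castSucc.succ
  have hsteps : unitStep w[k] + unitStep w[k] = unitStep (b k.castSucc) + unitStep c := by
    have hcorners : tilePos w k.succ + unitStep (b k.succ) =
        tilePos w k.castSucc + unitStep (b k.castSucc) + unitStep c :=
      (hb k.succ).symm.trans (hc.trans (congrArg (· + unitStep c) (hb k.castSucc)))
    rw [hk, Fin.val_succ, Fin.val_castSucc, tilePos_succ, add_assoc, add_assoc] at hcorners
    exact add_left_cancel hcorners
  cases hw : w[k] <;> cases hbk : b k.castSucc <;> cases c <;> simp_all [unitStep]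

lemma bijOn_cornerPath (w : List Bool) :
    Set.BijOn (cornerPath w) {b | IsCornerChoice w b} {p | IsSnakePath w p} := by
  refine ⟨fun b hb => hb.isSnakePath, (cornerPath_injective w).injOn, fun p hp => ?_⟩
  choose b hb using hp.exists_corner
  refine ⟨b, hp.isLatticePath.isCornerChoice hb, funext fun i => ?_⟩
  cases i using Fin.cases with
  | zero => exact hp.1.symm
  | succ i =>
    cases i using Fin.lastCases with
    | last => exact cornerPath_last.trans hp.2.1.symm
    | cast j => rw [cornerPath_castSucc_succ, hb]

end CornerChoice

section GeneratingFunction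

variable {R : Type*} [CommSemiring R] (q : R)

/-- The factor contributed by a tile whose chosen corner is `c`: the tile lies above the path
exactly when the path visits its lower right corner. -/
def cornerWeight (c : Bool) : R := if c then 1 else q

lemma IsCornerChoice.pow_pathArea {w : List Bool} {b : Fin (w.length + 1) → Bool}
    (hb : IsCornerChoice w b) :
    q ^ pathArea w (cornerPath w b) = ∏ j, cornerWeight q (b j) := by
  rw [pathArea, ← Finset.prod_const, Finset.prod_filter, Finset.prod_range]
  refine Finset.prod_congr rfl fun j _ => ?_
  rw [hb.isSnakePath.isLatticePath.tileAbove_iff (cornerPath_castSucc_succ j)]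
  cases h : b j <;> simp [cornerWeight]

/-- The generating function of the corner choices with prescribed first corner. -/
noncomputable def cornerSum (w : List Bool) (c : Bool) : R :=
  ∑ b : Fin (w.length + 1) → Bool with IsCornerChoice w b ∧ b 0 = c, ∏ j, cornerWeight q (b j)

lemma sum_isCornerChoice (w : List Bool) :
    ∑ b with IsCornerChoice w b, ∏ j, cornerWeight q (b j) =
      cornerSum q w true + cornerSum q w false := by
  rw [← Finset.sum_filter_add_sum_filter_not _ (fun b => b 0 = true), Finset.filter_filter,
    Finset.filter_filter]
  simp only [Bool.not_eq_true]
  rfl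

lemma finsum_pow_pathArea (w : List Bool) :
    ∑ᶠ p : {p : Fin (w.length + 3) → ℕ × ℕ // IsSnakePath w p}, q ^ pathArea w p.1 =
      cornerSum q w true + cornerSum q w false := by
  calc
    _ = ∑ᶠ p ∈ {p | IsSnakePath w p}, q ^ pathArea w p := finsum_set_coe_eq_finsum_mem _
    _ = ∑ᶠ b ∈ {b | IsCornerChoice w b}, ∏ j, cornerWeight q (b j) :=
      (finsum_mem_eq_of_bijOn _ (bijOn_cornerPath w) fun _ hb => (hb.pow_pathArea q).symm).symm
    _ = ∑ b with IsCornerChoice w b, ∏ j, cornerWeight q (b j) := by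
      rw [← Finset.coe_filter_univ, finsum_mem_coe_finset]
    _ = _ := sum_isCornerChoice q w

lemma cornerSum_nil (c : Bool) : cornerSum q [] c = cornerWeight q c := by
  rw [cornerSum, Finset.sum_eq_single_of_mem (fun _ => c)]
  · simp
  · simp [IsCornerChoice]
  · intro b hb hne
    refine absurd (funext fun j => ?_) hne
    rw [show j = 0 from Fin.fin_one_eq_zero j]
    exact (Finset.mem_filter.1 hb).2.2

lemma isCornerChoice_cons {w : List Bool} {b : Fin (w.length + 1) → Bool} (d c : Bool) :
    IsCornerChoice (d :: w) (Fin.cons c b : Fin (w.length + 1 + 1) → Bool) ↔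
      IsCornerChoice w b ∧ (b 0 = d → c = d) := by
  rw [and_comm]
  exact Fin.forall_fin_succ

lemma cornerSum_cons_eq_mul_sum (d c : Bool) (w : List Bool) :
    cornerSum q (d :: w) c = cornerWeight q c *
      ∑ b with IsCornerChoice w b ∧ (b 0 = d → c = d), ∏ j, cornerWeight q (b j) := by
  rw [cornerSum, Finset.mul_sum]
  symm
  refine Finset.sum_nbij' (Fin.cons (α := fun _ => Bool) c) Fin.tail
    (fun b hb => ?_) (fun b hb => ?_) (fun b _ => ?_) (fun b hb => ?_) (fun b _ => ?_)
  · exact Finset.mem_filter.2 ⟨Finset.mem_univ _,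
      (isCornerChoice_cons d c).2 (Finset.mem_filter.1 hb).2, rfl⟩
  · obtain ⟨hchoice, rfl⟩ := (Finset.mem_filter.1 hb).2
    rw [← Fin.cons_self_tail b] at hchoice
    exact Finset.mem_filter.2 ⟨Finset.mem_univ _, (isCornerChoice_cons d _).1 hchoice⟩
  · exact Fin.tail_cons _ _
  · obtain ⟨-, rfl⟩ := (Finset.mem_filter.1 hb).2
    exact Fin.cons_self_tail b
  · exact (Fin.prod_univ_succ fun j => cornerWeight q (Fin.cons (α := fun _ => Bool) c b j)).symm

lemma cornerSum_cons (d c : Bool) (w : List Bool) :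
    cornerSum q (d :: w) c = cornerWeight q c *
      if c = d then cornerSum q w true + cornerSum q w false else cornerSum q w c := by
  rw [cornerSum_cons_eq_mul_sum]
  split_ifs with hcd
  · simp only [hcd, implies_true, and_true, sum_isCornerChoice]
  · have hne : ∀ e, (e = d → c = d) ↔ e = c := by
      revert hcd
      cases c <;> cases d <;> decide
    simp only [hne, cornerSum]

/-- The product, applied to the column `(1, 1)`, of the `q`-deformed elementary matrices
`[[q, 1], [0, 1]]` (for the letter `false`) and `[[q, 0], [q, 1]]` (for the letter `true`). -/
def snakeVector : List Bool → R × R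
  | [] => (1, 1)
  | false :: w => (q * (snakeVector w).1 + (snakeVector w).2, (snakeVector w).2)
  | true :: w => (q * (snakeVector w).1, q * (snakeVector w).1 + (snakeVector w).2)

lemma cornerSum_eq_snakeVector (w : List Bool) :
    cornerSum q w false = q * (snakeVector q w).1 ∧ cornerSum q w true = (snakeVector q w).2 := by
  induction w with
  | nil => simp [cornerSum_nil, cornerWeight, snakeVector]
  | cons d w ih =>
    cases d <;> simp [cornerSum_cons, cornerWeight, snakeVector, ih, add_comm]

end GeneratingFunction

section SnakeVector

lemma isCoprime_snakeVector {R : Type*} [CommRing R] (q : R) (w : List Bool) :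
    IsCoprime (q * (snakeVector q w).1) (snakeVector q w).2 := by
  induction w with
  | nil => exact isCoprime_one_right
  | cons d w ih =>
    have hq : IsCoprime q (snakeVector q w).2 := ih.of_mul_left_left
    cases d
    · exact hq.mul_left (by simpa [snakeVector] using ih.add_mul_right_left 1)
    · exact (hq.mul_add_left_right _).mul_left
        (by simpa [snakeVector] using ih.mul_add_left_right 1)

lemma monic_snakeVector_X_and_degree_lt {R : Type*} [CommRing R] [Nontrivial R] (w : List Bool) :
    (snakeVector (X : R[X]) w).1.Monic ∧ (snakeVector (X : R[X]) w).2.Monic ∧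
      (snakeVector (X : R[X]) w).2.degree < (X * (snakeVector (X : R[X]) w).1).degree := by
  induction w with
  | nil => simp [snakeVector]
  | cons d w ih =>
    obtain ⟨hfst, hsnd, hlt⟩ := ih
    have hmul := monic_X.mul hfst
    have hadd := hmul.add_of_left hlt
    have hdeg {p : R[X]} (hp : p.Monic) : p.degree < (X * p).degree := by
      rw [X_mul]
      exact degree_lt_degree_mul_X hp.ne_zero
    cases d
    · refine ⟨hadd, hsnd, hlt.trans ?_⟩
      rw [← degree_add_eq_left_of_degree_lt hlt]
      exact hdeg hadd
    · refine ⟨hmul, hadd, ?_⟩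
      rw [snakeVector, degree_add_eq_left_of_degree_lt hlt]
      exact hdeg hmul

end SnakeVector

section ContinuedFraction

/-- The word `c^{a₁} (!c)^{a₂} c^{a₃} ⋯`, which for `c = false` is `R^{a₁} U^{a₂} R^{a₃} ⋯`; unlike
in `snakeWord`, the first and last runs are not shortened. -/
def alternatingWord : Bool → List ℕ → List Bool
  | _, [] => []
  | c, n :: l => List.replicate n c ++ alternatingWord (!c) l

lemma alternatingWord_eq_flatMap (c : Bool) (a : List ℕ) :
    alternatingWord c a =
      (List.range a.length).flatMap fun i => List.replicate (a.getD i 0) (c ^^ (i % 2 == 1)) := by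
  induction a generalizing c with
  | nil => rfl
  | cons n l ih =>
    have hparity (i : ℕ) : ((i + 1) % 2 == 1) = !(i % 2 == 1) := by
      rcases Nat.mod_two_eq_zero_or_one i with h | h <;> simp [Nat.add_mod, h]
    simp [alternatingWord, ih, List.range_succ_eq_map, List.flatMap_map, hparity]

lemma snakeWord_eq_alternatingWord (x y : ℕ) (l : List ℕ) :
    snakeWord ((x + 1) :: (l ++ [y + 1])) = alternatingWord false (x :: (l ++ [y])) := by
  rw [snakeWord, alternatingWord_eq_flatMap]
  simp only [List.length_cons, List.length_append, List.length_nil, Bool.false_xor]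
  refine List.flatMap_congr fun i hi => ?_
  rw [List.mem_range] at hi
  congr 1
  rcases i with _ | i
  · simp
  · rcases (show i ≤ l.length by omega).lt_or_eq with h | rfl
    · simp [List.getElem?_append_left h, h.ne]
    · simp

lemma qCF_cons (v : RatFunc ℚ) (n : ℕ) (l : List ℕ) :
    qCF v (n :: l) = (∑ i ∈ Finset.range n, v ^ i) + v ^ n / qCF v⁻¹ l := by
  cases l <;> simp [qCF]

lemma qCF_zero_cons (v : RatFunc ℚ) (l : List ℕ) : qCF v (0 :: l) = (qCF v⁻¹ l)⁻¹ := by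
  simp [qCF_cons]

lemma qCF_succ_cons (v : RatFunc ℚ) (n : ℕ) (l : List ℕ) :
    qCF v ((n + 1) :: l) = 1 + v * qCF v (n :: l) := by
  rw [qCF_cons, qCF_cons, geom_sum_succ, pow_succ']
  ring

/-- `z` or `z⁻¹`, according to whether a letter `false` or `true` is being read: the levels of a
`q`-deformed continued fraction alternate between `q` and `q⁻¹`. -/
def orient {G : Type*} [Inv G] (c : Bool) (z : G) : G := if c then z⁻¹ else z

lemma inv_orient {G : Type*} [InvolutiveInv G] (c : Bool) (z : G) :
    (orient c z)⁻¹ = orient (!c) z := by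
  cases c <;> simp [orient]

/-- The ratio of the two entries of `snakeVector X w`: the `q`-rational whose expansion has `w` as
its sequence of letters, one letter being dropped from the last run. -/
noncomputable def snakeSlope (w : List Bool) : RatFunc ℚ :=
  algebraMap ℚ[X] (RatFunc ℚ) (snakeVector X w).1 / algebraMap ℚ[X] (RatFunc ℚ) (snakeVector X w).2

lemma orient_snakeSlope_cons (c : Bool) (w : List Bool) :
    orient c (snakeSlope (c :: w)) = 1 + orient c RatFunc.X * orient c (snakeSlope w) := by
  obtain ⟨hfst, hsnd, -⟩ := monic_snakeVector_X_and_degree_lt (R := ℚ) w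
  have hX : (RatFunc.X : RatFunc ℚ) ≠ 0 := RatFunc.X_ne_zero
  have hfst' := RatFunc.algebraMap_ne_zero hfst.ne_zero
  have hsnd' := RatFunc.algebraMap_ne_zero hsnd.ne_zero
  cases c <;>
    simp only [snakeSlope, snakeVector, orient, map_add, map_mul, RatFunc.algebraMap_X,
      Bool.false_eq_true, if_false, if_true] <;>
    field_simp
  ring

lemma qCF_eq_orient_snakeSlope (c : Bool) (l : List ℕ) (y : ℕ) :
    qCF (orient c RatFunc.X) (l ++ [y + 1]) =
      orient c (snakeSlope (alternatingWord c (l ++ [y]))) := by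
  induction l generalizing c with
  | nil =>
    induction y with
    | zero => cases c <;> simp [qCF, alternatingWord, snakeSlope, snakeVector, orient]
    | succ y ih =>
      rw [List.nil_append, qCF_succ_cons]
      exact (congrArg (1 + _ * ·) ih).trans (orient_snakeSlope_cons c _).symm
  | cons n l ih =>
    induction n with
    | zero =>
      rw [List.cons_append, qCF_zero_cons, inv_orient, ih, inv_orient, Bool.not_not]
      rfl
    | succ n ihn =>
      rw [List.cons_append, qCF_succ_cons]
      exact (congrArg (1 + _ * ·) ihn).trans (orient_snakeSlope_cons c _).symm

lemma num_div_of_isCoprime {K : Type*} [Field K] {p q : K[X]} (hq : q.Monic)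
    (h : IsCoprime p q) :
    (algebraMap K[X] (RatFunc K) p / algebraMap K[X] (RatFunc K) q).num = p := by
  have hgcd : gcd p q = 1 := by
    rw [← normalize_gcd]
    exact normalize_eq_one.2 (gcd_isUnit_iff_isRelPrime.2 h.isRelPrime)
  rw [RatFunc.num_div, hgcd]
  simp [hq.leadingCoeff]

lemma num_snakeSlope (w : List Bool) : (snakeSlope w).num = (snakeVector X w).1 :=
  num_div_of_isCoprime (monic_snakeVector_X_and_degree_lt w).2.1
    (isCoprime_snakeVector X w).of_mul_left_right

end ContinuedFraction

theorem num_qRational_eq_snake_path_generating_function_general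
    (a : List ℕ) (hlen : 2 ≤ a.length) (hhead : a.head? ≠ some 0) (hlast : a.getLast? ≠ some 0) :
    (qCF RatFunc.X a).num =
      ∑ᶠ p : {p : Fin ((snakeWord a).length + 3) → ℕ × ℕ //
          IsSnakePath (snakeWord a) p},
        (X : ℚ[X]) ^ pathArea (snakeWord a) p.1 := by
  obtain ⟨x, l, y, rfl⟩ : ∃ x l y, a = (x + 1) :: (l ++ [y + 1]) := by
    obtain ⟨x, t, rfl⟩ := List.exists_cons_of_length_pos (by omega : 0 < a.length)
    obtain ⟨l, y, rfl⟩ := (List.eq_nil_or_concat' t).resolve_left (by rintro rfl; simp at hlen)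
    rw [← List.cons_append, List.getLast?_concat] at hlast
    obtain ⟨x, rfl⟩ := Nat.exists_eq_succ_of_ne_zero fun h => hhead (congrArg some h)
    obtain ⟨y, rfl⟩ := Nat.exists_eq_succ_of_ne_zero fun h => hlast (congrArg some h)
    exact ⟨x, l, y, rfl⟩
  have hslope : qCF RatFunc.X ((x + 1) :: (l ++ [y + 1])) =
      snakeSlope (false :: alternatingWord false (x :: (l ++ [y]))) :=
    qCF_eq_orient_snakeSlope false ((x + 1) :: l) y
  obtain ⟨hfalse, htrue⟩ :=
    cornerSum_eq_snakeVector (X : ℚ[X]) (alternatingWord false (x :: (l ++ [y])))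
  rw [snakeWord_eq_alternatingWord, finsum_pow_pathArea, hslope, num_snakeSlope, hfalse, htrue,
    add_comm]
  rfl

/-- The numerator `R(q)` of the q-rational `[r/s]_q` (with
`r/s = [a₁,…,a₂ₘ]`) equals the generating function `∑_p q^{|p|}` over monotone
lattice paths `p` on the snake graph `G(r/s)`, where `|p|` is the number of tiles
above `p`. -/
theorem num_qRational_eq_snake_path_generating_function
    (m : ℕ) (hm : 0 < m) (a : List ℕ) (hlen : a.length = 2 * m)
    (hpos : ∀ x ∈ a, 1 ≤ x) :
    (qCF RatFunc.X a).num =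
      ∑ᶠ p : {p : Fin ((snakeWord a).length + 3) → ℕ × ℕ //
          IsSnakePath (snakeWord a) p},
        (Polynomial.X : Polynomial ℚ) ^ pathArea (snakeWord a) p.1 := by
  exact num_qRational_eq_snake_path_generating_function_general a (by omega)
    (fun h => absurd (hpos 0 (List.mem_of_mem_head? h)) (by decide))
    (fun h => absurd (hpos 0 (List.mem_of_getLast? h)) (by decide))
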